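/- For every n ≥ 3, the matrix Q̂ᵀ L_n is upper triangular with strictly positive diagonal entries. Consequently, Q_n := Q̂ D̂^{−1/2} is an orthogonal matrix and is the orthogonal factor of the QR factorization of L_n (with upper triangular factor having positive diagonal): L_n = Q_n R with R = D̂^{−1/2} Q̂ᵀ L_n upper triangular with positive diagonal. -/

import Mathlib

open Matrix Filter

/-- Gaussian-elimination intermediate entry `A^{(k+1)}_{ij}` (0-indexed step `k`):
the Schur complement of the leading `k × k` block. -/
noncomputable def geEntry {n : ℕ} (A : Matrix (Fin n) (Fin n) ℝ) (k i j : Fin n) : ℝ :=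
  A i j - ∑ a : Fin k.val, ∑ b : Fin k.val,
    A i (Fin.castLE k.isLt.le a) *
      (A.submatrix (Fin.castLE k.isLt.le) (Fin.castLE k.isLt.le))⁻¹ a b *
      A (Fin.castLE k.isLt.le b) j

/-- `A` is PP: at each GE step the pivot dominates its column. -/
def IsPP {n : ℕ} (A : Matrix (Fin n) (Fin n) ℝ) : Prop :=
  ∀ k i : Fin n, k ≤ i → |geEntry A k i k| ≤ |geEntry A k k k|

/-- `A` is CP: at each GE step the pivot dominates the whole untriangularized block. -/
def IsCP {n : ℕ} (A : Matrix (Fin n) (Fin n) ℝ) : Prop :=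
  ∀ k i j : Fin n, k ≤ i → k ≤ j → |geEntry A k i j| ≤ |geEntry A k k k|

/-- Maximal absolute Gaussian-elimination intermediate entry of `A`. -/
noncomputable def maxGE {n : ℕ} (A : Matrix (Fin n) (Fin n) ℝ) : ℝ :=
  ⨆ k : Fin n, ⨆ i : {i : Fin n // k ≤ i}, ⨆ j : {j : Fin n // k ≤ j},
    |geEntry A k i.1 j.1|

/-- `max_{i,j} |A_{ij}|`. -/
noncomputable def maxAbs {n : ℕ} (A : Matrix (Fin n) (Fin n) ℝ) : ℝ :=
  ⨆ i, ⨆ j, |A i j|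

/-- Growth factor `ρ(A)`. -/
noncomputable def growth {n : ℕ} (A : Matrix (Fin n) (Fin n) ℝ) : ℝ :=
  maxGE A / maxAbs A

/-- `P` is a permutation matrix. -/
def IsPermMatrix {n : ℕ} (P : Matrix (Fin n) (Fin n) ℝ) : Prop :=
  ∃ σ : Equiv.Perm (Fin n), P = σ.permMatrix ℝ

/-- `D` is a diagonal matrix with diagonal entries `±1`. -/
def IsSignDiag {n : ℕ} (D : Matrix (Fin n) (Fin n) ℝ) : Prop :=
  (∀ i j, i ≠ j → D i j = 0) ∧ (∀ i, D i i = 1 ∨ D i i = -1)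

/-- Wilkinson's unipotent lower triangular matrix `L_n`. -/
def Lmat (n : ℕ) : Matrix (Fin n) (Fin n) ℝ :=
  fun i j => if i = j then 1 else if j < i then -1 else 0

/-- Wilkinson's upper triangular factor `U_n`. -/
def Umat (n : ℕ) : Matrix (Fin n) (Fin n) ℝ :=
  fun i j => if (j : ℕ) = n - 1 then 2 ^ (i : ℕ) else if i = j then 1 else 0

/-- Wilkinson's worst-case GEPP growth matrix `A_n`. -/
def Amat (n : ℕ) : Matrix (Fin n) (Fin n) ℝ :=
  fun i j =>
    if (j : ℕ) = n - 1 ∧ (i : ℕ) < n - 1 then 1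
    else if i = j then 1
    else if j < i then -1
    else 0

/-- `α_j = 1 + (2/3)(4^{j-1} - 1)` (1-indexed `j`). -/
noncomputable def alpha (j : ℕ) : ℝ := 1 + 2 / 3 * (4 ^ (j - 1) - 1)

/-- The unnormalized orthogonal factor `Q̂` (columns of `Qhat n` are, 1-indexed,
the columns described in the paper; here 0-indexed). -/
noncomputable def Qhat (n : ℕ) : Matrix (Fin n) (Fin n) ℝ :=
  fun i j =>
    if (j : ℕ) = n - 1 then
      if (i : ℕ) = n - 1 then 1 else 2 ^ (n - 2 - (i : ℕ))
    else if (j : ℕ) = n - 2 then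
      if (i : ℕ) = n - 2 then 1 else if (i : ℕ) = n - 1 then -1 else 0
    else if (i : ℕ) < (j : ℕ) then
      -((n : ℝ) - (j : ℕ) - 2) * 2 ^ ((j : ℕ) - (i : ℕ) - 1)
    else if (i : ℕ) = (j : ℕ) then
      ((n : ℝ) - (j : ℕ) - 1) * (alpha ((j : ℕ) + 1) - 1) + 1
    else -alpha ((j : ℕ) + 1)

/-- The diagonal normalization matrix `D̂`. -/
noncomputable def Dhat (n : ℕ) : Matrix (Fin n) (Fin n) ℝ :=
  Matrix.diagonal fun j =>
    if (j : ℕ) = 0 then (n : ℝ)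
    else if (j : ℕ) = n - 2 then 2
    else if (j : ℕ) = n - 1 then 2 * alpha (n - 1)
    else ((n : ℝ) - (j : ℕ) - 1) ^ 2 * (alpha ((j : ℕ) + 1) - 1) ^ 2 *
        (2 * alpha ((j : ℕ) + 1) - 1) / (2 * alpha ((j : ℕ) + 1) - 2) +
      ((n : ℝ) - (j : ℕ) - 1) * (alpha ((j : ℕ) + 1) ^ 2 + alpha ((j : ℕ) + 1) - 1) +
      2 * alpha (j : ℕ)

/-- `Q_n = Q̂ D̂^{-1/2}`, the orthogonal QR factor of `L_n`. -/
noncomputable def Qmat (n : ℕ) : Matrix (Fin n) (Fin n) ℝ :=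
  Qhat n * Matrix.diagonal fun m => (Real.sqrt (Dhat n m m))⁻¹

/-- Frobenius norm. -/
noncomputable def frobNorm {n : ℕ} (M : Matrix (Fin n) (Fin n) ℝ) : ℝ :=
  Real.sqrt (∑ i, ∑ j, M i j ^ 2)

/-- The Givens rotation `G(θ, i, j)`. -/
noncomputable def givens (n : ℕ) (θ : ℝ) (i j : Fin n) : Matrix (Fin n) (Fin n) ℝ :=
  fun a b =>
    if a = i ∧ b = i then Real.cos θ
    else if a = j ∧ b = j then Real.cos θ
    else if a = i ∧ b = j then -Real.sin θ
    else if a = j ∧ b = i then Real.sin θ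
    else if a = b then 1 else 0

/-- The ordered product of Givens rotations `Q(θ) = ∏_{i=1}^{n-1} ∏_{j=i+1}^n G(θ_{ij}, i, j)`. -/
noncomputable def QofTheta (n : ℕ) (θ : Fin n → Fin n → ℝ) : Matrix (Fin n) (Fin n) ℝ :=
  ((List.finRange n).map fun i =>
    (((List.finRange n).filter fun j => decide (i < j)).map fun j =>
      givens n (θ i j) i j).prod).prod


/-- Column profile: `t 2^(j-k-1)` above row `j`, `d` at row `j`, `-b` below. -/
structure ColSpec (n j : ℕ) (t d b : ℝ) (f : ℕ → ℝ) : Prop where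
  hj : j < n
  up : ∀ k, k < j → f k = t * 2 ^ (j - k - 1)
  dg : f j = d
  lo : ∀ k, j < k → k < n → f k = -b
  bal : ((n : ℝ) - 1 - j) * b = d - t

lemma sum_split (n j : ℕ) (hj : j < n) (F : ℕ → ℝ) (G : ℕ → ℝ)
    (h : ∀ k, j < k → k < n → F k = G k) :
    ∑ k ∈ Finset.range n, F k =
      ∑ k ∈ Finset.range j, F k + F j +
        (∑ k ∈ Finset.range n, G k - ∑ k ∈ Finset.range (j + 1), G k) := by
  obtain ⟨m, rfl⟩ : ∃ m, n = j + 1 + m := ⟨n - (j + 1), by omega⟩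
  rw [Finset.sum_range_add, Finset.sum_range_succ, Finset.sum_range_add G]
  have : ∑ x ∈ Finset.range m, F (j + 1 + x) = ∑ x ∈ Finset.range m, G (j + 1 + x) := by
    refine Finset.sum_congr rfl fun x hx => ?_
    have := Finset.mem_range.1 hx
    exact h _ (by omega) (by omega)
  rw [this]; ring

lemma geo4 (i : ℕ) : ∑ k ∈ Finset.range i, (4 : ℝ) ^ (i - k - 1) = (4 ^ i - 1) / 3 := by
  have h := Finset.sum_range_reflect (fun k => (4 : ℝ) ^ k) i
  have e : ∑ k ∈ Finset.range i, (4 : ℝ) ^ (i - k - 1)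
      = ∑ k ∈ Finset.range i, (4 : ℝ) ^ (i - 1 - k) :=
    Finset.sum_congr rfl fun k _ => by congr 1; omega
  rw [e, h, geom_sum_eq (by norm_num)]
  norm_num

namespace ColSpec
variable {n j i : ℕ} {t d b t' d' b' : ℝ} {f g : ℕ → ℝ}

lemma psum (h : ColSpec n j t d b f) (c : ℕ) (hc : c ≤ j) :
    ∑ k ∈ Finset.range c, f k = t * (2 ^ j - 2 ^ (j - c)) := by
  induction c with
  | zero => simp
  | succ c ih =>
    rw [Finset.sum_range_succ, ih (by omega), h.up c (by omega)]
    obtain ⟨s, rfl⟩ : ∃ s, j = c + 1 + s := ⟨j - (c + 1), by omega⟩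
    have e1 : c + 1 + s - c = s + 1 := by omega
    have e2 : c + 1 + s - (c + 1) = s := by omega
    rw [e1, e2, Nat.add_sub_cancel, pow_succ]; ring

lemma total (h : ColSpec n j t d b f) :
    ∑ k ∈ Finset.range n, f k = t * 2 ^ j := by
  rw [sum_split n j h.hj f (fun _ => -b) h.lo, h.psum j le_rfl, h.dg]
  have := h.bal
  simp only [Finset.sum_const, Finset.card_range, nsmul_eq_mul, Nat.sub_self, pow_zero]
  push_cast
  linarith

lemma tail (h : ColSpec n j t d b f) (c : ℕ) (hc : c ≤ j) :
    ∑ k ∈ Finset.range n, f k - ∑ k ∈ Finset.range c, f k = t * 2 ^ (j - c) := by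
  rw [h.total, h.psum c hc]; ring

lemma tail_succ (h : ColSpec n j t d b f) :
    ∑ k ∈ Finset.range n, f k - ∑ k ∈ Finset.range (j + 1), f k = t - d := by
  have := h.tail j le_rfl
  rw [Finset.sum_range_succ, h.dg]
  simp at this
  linarith

/-- orthogonality -/
lemma orth (h : ColSpec n j t d b f) (h' : ColSpec n i t' d' b' g) (hij : i < j)
    (hb : -b' + d' + t' * (2 / 3 * (4 ^ i - 1)) = 0) :
    ∑ k ∈ Finset.range n, f k * g k = 0 := by
  rw [sum_split n i h'.hj (fun k => f k * g k) (fun k => f k * (-b'))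
    (fun k h1 h2 => by simp only [h'.lo k h1 h2])]
  have e1 : ∑ k ∈ Finset.range i, f k * g k = t * t' * 2 ^ (j - i) * ((4 ^ i - 1) / 3) := by
    rw [← geo4, Finset.mul_sum]
    refine Finset.sum_congr rfl fun k hk => ?_
    have hk := Finset.mem_range.1 hk
    rw [h.up k (by omega), h'.up k hk]
    have e : j - k - 1 = (j - i) + (i - k - 1) := by omega
    have e4 : (4 : ℝ) = 2 * 2 := by norm_num
    rw [e, pow_add, e4, mul_pow]; ring
  rw [e1, h'.dg, h.up i hij, ← Finset.sum_mul, ← Finset.sum_mul, ← sub_mul,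
    h.tail (i + 1) hij]
  have e2 : j - i = (j - (i + 1)) + 1 := by omega
  have e3 : j - i - 1 = j - (i + 1) := by omega
  rw [e3, e2, pow_succ]
  linear_combination (t * 2 ^ (j - (i + 1))) * hb

lemma normsq (h : ColSpec n j t d b f) :
    ∑ k ∈ Finset.range n, f k * f k =
      t ^ 2 * ((4 ^ j - 1) / 3) + d ^ 2 + ((n : ℝ) - 1 - j) * b ^ 2 := by
  rw [sum_split n j h.hj (fun k => f k * f k) (fun k => b ^ 2)
    (fun k h1 h2 => by simp only [h.lo k h1 h2]; ring)]
  have e1 : ∑ k ∈ Finset.range j, f k * f k = t ^ 2 * ((4 ^ j - 1) / 3) := by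
    rw [← geo4, Finset.mul_sum]
    refine Finset.sum_congr rfl fun k hk => ?_
    have hk := Finset.mem_range.1 hk
    have e4 : (4 : ℝ) = 2 * 2 := by norm_num
    rw [h.up k (by omega), e4, mul_pow]; ring
  rw [e1, h.dg]
  simp only [Finset.sum_const, Finset.card_range, nsmul_eq_mul]
  push_cast
  ring

end ColSpec

/-- `Q̂` on natural-number indices. -/
noncomputable def qf (n j i : ℕ) : ℝ :=
    if j = n - 1 then
      if i = n - 1 then 1 else 2 ^ (n - 2 - i)
    else if j = n - 2 then
      if i = n - 2 then 1 else if i = n - 1 then -1 else 0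
    else if i < j then
      -((n : ℝ) - j - 2) * 2 ^ (j - i - 1)
    else if i = j then
      ((n : ℝ) - j - 1) * (alpha (j + 1) - 1) + 1
    else -alpha (j + 1)

noncomputable def tf (n j : ℕ) : ℝ :=
  if j = n - 1 then 1 else if j = n - 2 then 0 else -((n : ℝ) - j - 2)
noncomputable def df (n j : ℕ) : ℝ :=
  if j = n - 1 then 1 else if j = n - 2 then 1 else
    ((n : ℝ) - j - 1) * (alpha (j + 1) - 1) + 1
noncomputable def bf (n j : ℕ) : ℝ :=
  if j = n - 1 then 0 else if j = n - 2 then 1 else alpha (j + 1)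

lemma alpha_succ (j : ℕ) : alpha (j + 1) = 1 + 2 / 3 * (4 ^ j - 1) := by
  simp [alpha]

lemma alpha_ge (j : ℕ) : 1 ≤ alpha j := by
  have : (1 : ℝ) ≤ 4 ^ (j - 1) := one_le_pow₀ (by norm_num)
  unfold alpha; linarith

lemma cast_pred {n : ℕ} (hn : 3 ≤ n) : ((n - 1 : ℕ) : ℝ) = n - 1 := by
  rw [Nat.cast_sub (by omega)]; norm_num

lemma cast_pred2 {n : ℕ} (hn : 3 ≤ n) : ((n - 2 : ℕ) : ℝ) = n - 2 := by
  rw [Nat.cast_sub (by omega)]; norm_num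

lemma qf_spec (n j : ℕ) (hn : 3 ≤ n) (hj : j < n) :
    ColSpec n j (tf n j) (df n j) (bf n j) (qf n j) := by
  unfold tf df bf qf
  by_cases h1 : j = n - 1
  · simp only [h1, if_true]
    refine ⟨by omega, fun k hk => ?_, by simp, fun k h2 h3 => by omega, ?_⟩
    · rw [if_neg (by omega), one_mul]; congr 1; omega
    · simp
  by_cases h2 : j = n - 2
  · have h3 : ¬ (n - 2 = n - 1) := by omega
    simp only [h2, h3, if_true, if_false]
    refine ⟨by omega, fun k hk => ?_, by simp, fun k h2 h3 => ?_, ?_⟩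
    · rw [if_neg (by omega), if_neg (by omega)]; simp
    · rw [if_neg (by omega), if_pos (by omega)]
    · rw [cast_pred2 hn]; ring
  · simp only [h1, h2, if_false]
    refine ⟨hj, fun k hk => ?_, by simp, fun k h2 h3 => ?_, ?_⟩
    · rw [if_pos hk]
    · rw [if_neg (by omega), if_neg (by omega)]
    · ring

lemma df_pos (n j : ℕ) (hj : j < n) : 0 < df n j := by
  unfold df
  split_ifs
  · norm_num
  · norm_num
  · have h1 : (j : ℝ) + 1 ≤ n := by exact_mod_cast hj
    have h2 := alpha_ge (j + 1)
    have := mul_nonneg (by linarith : (0 : ℝ) ≤ (n : ℝ) - j - 1)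
      (by linarith : (0 : ℝ) ≤ alpha (j + 1) - 1)
    linarith

lemma tf_le (n j : ℕ) (hj : j < n) : tf n j ≤ 1 ∧ (tf n j = 1 → df n j = 1) ∧
    0 < 2 * df n j - tf n j := by
  have hd := df_pos n j hj
  unfold tf df at *
  split_ifs at *
  · norm_num
  · norm_num
  · have h1 : (j : ℝ) + 2 ≤ n := by
      have : j + 2 ≤ n := by omega
      exact_mod_cast this
    refine ⟨by linarith, fun h => by linarith, by linarith⟩

lemma bf_rel (n i : ℕ) (hi : i + 1 < n) :
    -bf n i + df n i + tf n i * (2 / 3 * (4 ^ i - 1)) = 0 := by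
  unfold bf df tf
  have h : ¬ (i = n - 1) := by omega
  simp only [h, if_false, alpha_succ]
  split_ifs
  · norm_num
  · ring

lemma Qhat_eq (n : ℕ) (i j : Fin n) : Qhat n i j = qf n j i := rfl

lemma QL (n : ℕ) (j c : Fin n) :
    ((Qhat n)ᵀ * Lmat n) j c = qf n j c -
      (∑ k ∈ Finset.range n, qf n j k - ∑ k ∈ Finset.range (c + 1), qf n j k) := by
  rw [Matrix.mul_apply]
  have e : ∀ k : Fin n, (Qhat n)ᵀ j k * Lmat n k c =
      (fun k : ℕ => qf n j k * (if k = (c : ℕ) then 1 else if (c : ℕ) < k then -1 else 0)) k := by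
    intro k
    simp only [Matrix.transpose_apply, Qhat_eq, Lmat, Fin.ext_iff, Fin.lt_def]
  rw [Finset.sum_congr rfl fun k _ => e k]
  rw [Fin.sum_univ_eq_sum_range
    (fun k : ℕ => qf n j k * (if k = (c : ℕ) then (1 : ℝ) else if (c : ℕ) < k then -1 else 0)) n]
  rw [sum_split n c c.2 _ (fun k => - qf n j k)]
  · rw [Finset.sum_eq_zero]
    · simp only [Finset.sum_neg_distrib, if_true]; ring
    · intro k hk
      have := Finset.mem_range.1 hk
      rw [if_neg (by omega), if_neg (by omega), mul_zero]
  · intro k h1 h2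
    rw [if_neg (by omega), if_pos h1]; ring

lemma QQ (n : ℕ) (i j : Fin n) :
    ((Qhat n)ᵀ * Qhat n) i j = ∑ k ∈ Finset.range n, qf n i k * qf n j k := by
  rw [Matrix.mul_apply, ← Fin.sum_univ_eq_sum_range (fun k => qf n i k * qf n j k)]
  rfl

lemma normsq_eq (n : ℕ) (hn : 3 ≤ n) (j : Fin n) :
    ∑ k ∈ Finset.range n, qf n j k * qf n j k = Dhat n j j := by
  rw [(qf_spec n j hn j.2).normsq]
  simp only [Dhat, Matrix.diagonal_apply_eq]
  unfold tf df bf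
  obtain ⟨j, hj⟩ := j
  simp only
  by_cases h0 : j = 0
  · subst h0
    have h1 : ¬ (0 = n - 1) := by omega
    have h2 : ¬ (0 = n - 2) := by omega
    simp only [h1, h2, if_false]
    simp [alpha]
  rw [if_neg h0]
  by_cases h1 : j = n - 1
  · have h3 : ¬ (n - 1 = n - 2) := by omega
    simp only [h1, h3, if_true, if_false]
    obtain ⟨m, rfl⟩ : ∃ m, n = m + 2 := ⟨n - 2, by omega⟩
    simp only [alpha, Nat.add_sub_cancel, show m + 2 - 1 = m + 1 by omega, pow_succ]
    push_cast
    ring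
  by_cases h2 : j = n - 2
  · have h3 : ¬ (n - 2 = n - 1) := by omega
    simp only [h2, h3, if_true, if_false]
    rw [cast_pred2 hn]; ring
  simp only [h1, h2, if_false]
  obtain ⟨m, rfl⟩ : ∃ m, j = m + 1 := ⟨j - 1, by omega⟩
  have hp : (1 : ℝ) ≤ 4 ^ m := one_le_pow₀ (by norm_num)
  rw [alpha_succ, alpha_succ, pow_succ (4 : ℝ) m]
  have hne : (2 * (1 + 2 / 3 * ((4 : ℝ) ^ m * 4 - 1)) - 2) ≠ 0 := by
    apply ne_of_gt; linarith
  generalize (4 : ℝ) ^ m = x at *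
  push_cast
  rw [← sub_eq_zero]
  have hx : x * 4 - 1 ≠ 0 := by intro h; apply hne; rw [h]; ring
  have e : (2 * (1 + 2 / 3 * (x * 4 - 1)) - 2) = 4 / 3 * (x * 4 - 1) := by ring
  rw [e]
  field_simp
  ring

lemma Dpos (n : ℕ) (hn : 3 ≤ n) (j : Fin n) : 0 < Dhat n j j := by
  rw [← normsq_eq n hn j]
  refine Finset.sum_pos' (fun k _ => mul_self_nonneg _) ⟨j, Finset.mem_range.2 j.2, ?_⟩
  rw [(qf_spec n j hn j.2).dg]
  have := df_pos n j j.2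
  positivity

lemma QtQ (n : ℕ) (hn : 3 ≤ n) : (Qhat n)ᵀ * Qhat n = Dhat n := by
  ext i j
  rw [QQ]
  have key : ∀ i j : Fin n, i < j → ∑ k ∈ Finset.range n, qf n j k * qf n i k = 0 := by
    intro i j h
    have hh : (i : ℕ) < j := h
    exact (qf_spec n j hn j.2).orth (qf_spec n i hn i.2) h (bf_rel n i (by omega))
  rcases lt_trichotomy i j with h | h | h
  · rw [Dhat, Matrix.diagonal_apply_ne _ h.ne, ← key i j h]
    exact Finset.sum_congr rfl fun k _ => mul_comm _ _
  · subst h; exact normsq_eq n hn i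
  · rw [Dhat, Matrix.diagonal_apply_ne _ h.ne', key j i h]

/-- for `n ≥ 3`, `Q̂ᵀ L_n` is upper triangular with strictly positive diagonal;
consequently `Q_n = Q̂ D̂^{-1/2}` is orthogonal and is the orthogonal factor of the QR
factorization of `L_n`, with `R = D̂^{-1/2} Q̂ᵀ L_n` upper triangular with positive diagonal. -/
theorem Qn_is_QR_factor_of_Ln (n : ℕ) (hn : 3 ≤ n) :
    (∀ i j : Fin n, j < i → ((Qhat n)ᵀ * Lmat n) i j = 0) ∧
    (∀ i : Fin n, 0 < ((Qhat n)ᵀ * Lmat n) i i) ∧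
    (Qmat n)ᵀ * Qmat n = 1 ∧
    (∀ i j : Fin n, j < i →
      ((Matrix.diagonal fun m => (Real.sqrt (Dhat n m m))⁻¹) * (Qhat n)ᵀ * Lmat n) i j = 0) ∧
    (∀ i : Fin n,
      0 < ((Matrix.diagonal fun m => (Real.sqrt (Dhat n m m))⁻¹) * (Qhat n)ᵀ * Lmat n) i i) ∧
    Lmat n =
      Qmat n * ((Matrix.diagonal fun m => (Real.sqrt (Dhat n m m))⁻¹) * (Qhat n)ᵀ * Lmat n) := by
  have hU : ∀ i j : Fin n, j < i → ((Qhat n)ᵀ * Lmat n) i j = 0 := by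
    intro i j h
    have s := qf_spec n i hn i.2
    rw [QL, s.tail (j + 1) h, s.up j h, Nat.sub_sub, sub_self]
  have hP : ∀ i : Fin n, 0 < ((Qhat n)ᵀ * Lmat n) i i := by
    intro i
    have s := qf_spec n i hn i.2
    rw [QL, s.tail_succ, s.dg]
    have := (tf_le n i i.2).2.2
    linarith
  have hO : (Qmat n)ᵀ * Qmat n = 1 := by
    unfold Qmat
    rw [Matrix.transpose_mul, Matrix.diagonal_transpose, Matrix.mul_assoc,
      ← Matrix.mul_assoc (Qhat n)ᵀ, QtQ n hn]
    ext i j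
    have hD : Dhat n = Matrix.diagonal fun m => Dhat n m m := by
      ext a b
      by_cases hab : a = b
      · subst hab; rw [Matrix.diagonal_apply_eq]
      · rw [Matrix.diagonal_apply_ne _ hab, Dhat, Matrix.diagonal_apply_ne _ hab]
    generalize hw : (fun m => (Real.sqrt (Dhat n m m))⁻¹) = w
    rw [hD, Matrix.diagonal_mul_diagonal, Matrix.diagonal_mul_diagonal]
    by_cases hij : i = j
    · subst hij
      rw [Matrix.diagonal_apply_eq, Matrix.one_apply_eq, ← hw]
      have h1 := Dpos n hn i
      have h2 := Real.sqrt_pos.2 h1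
      have h3 := Real.mul_self_sqrt h1.le
      field_simp
      nlinarith
    · rw [Matrix.diagonal_apply_ne _ hij, Matrix.one_apply_ne hij]
  refine ⟨hU, hP, hO, ?_, ?_, ?_⟩
  · intro i j h
    rw [Matrix.mul_assoc, Matrix.diagonal_mul, hU i j h, mul_zero]
  · intro i
    rw [Matrix.mul_assoc, Matrix.diagonal_mul]
    exact mul_pos (inv_pos.2 (Real.sqrt_pos.2 (Dpos n hn i))) (hP i)
  · have hO' : Qmat n * (Qmat n)ᵀ = 1 := mul_eq_one_comm.1 hO
    have e : (Matrix.diagonal fun m => (Real.sqrt (Dhat n m m))⁻¹) * (Qhat n)ᵀ = (Qmat n)ᵀ := by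
      unfold Qmat
      rw [Matrix.transpose_mul, Matrix.diagonal_transpose]
    rw [e, ← Matrix.mul_assoc, hO', Matrix.one_mul]
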